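/- Let λ : ℝ → ℝ be nonnegative on (0,∞), let f, g : ℝ → ℝ, let x₀ ∈ ℝ and let C ∈ (0, 1/3]. Assume that for every k ∈ (0,1] there exists ε₀ > 0 such that for all ε with 0 < ε < ε₀ and all δ with |δ| ≤ ε one has |(f(x₀+δ) − f(x₀)) − (g(x₀+δ) − g(x₀))| ≤ k·λ(ε). Suppose (εₙ) is a sequence of positive reals tending to 0 such that λ(εₙ)/εₙ³ converges to a finite limit K, and (δₙ) is a sequence with C·εₙ ≤ |δₙ| ≤ εₙ/3 for all n. Then the difference of third forward difference quotients ((f(x₀+3δₙ) − 3f(x₀+2δₙ) + 3f(x₀+δₙ) − f(x₀))/δₙ³) − ((g(x₀+3δₙ) − 3g(x₀+2δₙ) + 3g(x₀+δₙ) − g(x₀))/δₙ³) tends to 0 as n → ∞. -/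

import Mathlib

open Filter Topology

/-! Put `u = f - g`. An `m`-th forward difference of `u` at `x` with step `h` is a combination, of
total weight `2 ^ m`, of the increments `u (x + j • h) - u x` with `j ≤ m`: subtracting the
constant `u x` is harmless when `m ≠ 0`. If `m * ‖h‖ ≤ ε`, all these increments are at most
`k * lam ε`, where the refinement factor `k` is arbitrary; so the difference is `o(lam ε)`, which
is `o(‖h‖ ^ m)` as soon as `lam ε = O(ε ^ m)` and `ε = O(‖h‖)`. -/

open Asymptotics

section ForwardDifference

variable {M G : Type*} [AddCommMonoid M]

lemma fwdDiff_iter_sub [AddCommGroup G] (h : M) (f g : M → G) (n : ℕ) :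
    (fwdDiff h)^[n] (f - g) = (fwdDiff h)^[n] f - (fwdDiff h)^[n] g := by
  rw [eq_sub_iff_add_eq, ← fwdDiff_iter_add, sub_add_cancel]

lemma fwdDiff_iter_sub_const [AddCommGroup G] (h : M) (f : M → G) (c : G) {n : ℕ} (hn : n ≠ 0) :
    (fwdDiff h)^[n] (fun x ↦ f x - c) = (fwdDiff h)^[n] f := by
  obtain ⟨n, rfl⟩ := Nat.exists_eq_succ_of_ne_zero hn
  have first_step : fwdDiff h (fun x ↦ f x - c) = fwdDiff h f :=
    funext fun _ ↦ sub_sub_sub_cancel_right _ _ _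
  rw [Function.iterate_succ_apply, Function.iterate_succ_apply, first_step]

lemma fwdDiff_iter_three_apply [AddCommGroup G] (h : M) (f : M → G) (x : M) :
    (fwdDiff h)^[3] f x = f (x + 3 • h) - 3 • f (x + 2 • h) + 3 • f (x + h) - f x := by
  simp only [Function.iterate_succ_apply, Function.iterate_zero_apply, fwdDiff, succ_nsmul,
    zero_nsmul, zero_add, add_assoc]
  abel

lemma norm_fwdDiff_iter_le [SeminormedAddCommGroup G] {h : M} {f : M → G} {B : ℝ} {n : ℕ} {x : M}
    (hB : ∀ j ≤ n, ‖f (x + j • h)‖ ≤ B) : ‖(fwdDiff h)^[n] f x‖ ≤ 2 ^ n * B := by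
  induction n generalizing x with
  | zero => simpa using hB 0 le_rfl
  | succ n ih =>
    have here : ‖(fwdDiff h)^[n] f x‖ ≤ 2 ^ n * B := ih fun j hj ↦ hB j (hj.trans n.le_succ)
    have shifted : ‖(fwdDiff h)^[n] f (x + h)‖ ≤ 2 ^ n * B := ih fun j hj ↦ by
      simpa only [succ_nsmul', add_assoc] using hB (j + 1) (Nat.succ_le_succ hj)
    calc ‖(fwdDiff h)^[n + 1] f x‖ = ‖(fwdDiff h)^[n] f (x + h) - (fwdDiff h)^[n] f x‖ := by
          rw [Function.iterate_succ_apply', fwdDiff]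
      _ ≤ 2 ^ n * B + 2 ^ n * B := norm_sub_le_of_le shifted here
      _ = 2 ^ (n + 1) * B := by ring

lemma norm_fwdDiff_iter_le_of_increments [SeminormedAddCommGroup G] {h : M} {f : M → G} {B : ℝ}
    {n : ℕ} {x : M} (hn : n ≠ 0) (hB : ∀ j ≤ n, ‖f (x + j • h) - f x‖ ≤ B) :
    ‖(fwdDiff h)^[n] f x‖ ≤ 2 ^ n * B := by
  rw [← fwdDiff_iter_sub_const h f (f x) hn]
  exact norm_fwdDiff_iter_le hB

end ForwardDifference

/-- The increments of `f` and `g` at `x` agree up to the measurement error `lam`, and the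
measurements may be refined by any factor `k ∈ (0, 1]`: in `ε`-small regions, with `ε` small enough
depending on `k`, the two increments differ by at most `k * lam ε`. -/
def RefinablyClose {E F : Type*} [SeminormedAddCommGroup E] [SeminormedAddCommGroup F]
    (lam : ℝ → ℝ) (f g : E → F) (x : E) : Prop :=
  ∀ k : ℝ, 0 < k → k ≤ 1 → ∃ ε₀ > 0, ∀ ε : ℝ, 0 < ε → ε < ε₀ →
    ∀ δ : E, ‖δ‖ ≤ ε → ‖(f (x + δ) - f x) - (g (x + δ) - g x)‖ ≤ k * lam ε

namespace RefinablyClose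

variable {E F : Type*} [SeminormedAddCommGroup E] [SeminormedAddCommGroup F]
  {lam : ℝ → ℝ} {f g : E → F} {x : E}

lemma eventually_norm_increment_le (hfg : RefinablyClose lam f g x) {c : ℝ} (hc : 0 < c) :
    ∀ᶠ ε in 𝓝[>] 0, ∀ δ : E, ‖δ‖ ≤ ε → ‖(f - g) (x + δ) - (f - g) x‖ ≤ c * ‖lam ε‖ := by
  obtain ⟨ε₀, hε₀, hclose⟩ := hfg (min c 1) (lt_min hc one_pos) (min_le_right c 1)
  filter_upwards [Ioo_mem_nhdsGT hε₀] with ε ⟨hε, hεε₀⟩ δ hδ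
  calc ‖(f - g) (x + δ) - (f - g) x‖ = ‖(f (x + δ) - f x) - (g (x + δ) - g x)‖ := by
        rw [Pi.sub_apply, Pi.sub_apply, sub_sub_sub_comm]
    _ ≤ min c 1 * lam ε := hclose ε hε hεε₀ δ hδ
    _ ≤ min c 1 * ‖lam ε‖ := by gcongr; exact Real.le_norm_self _
    _ ≤ c * ‖lam ε‖ := by gcongr; exact min_le_left c 1

theorem isLittleO_fwdDiff_iter (hfg : RefinablyClose lam f g x) {ι : Type*} {l : Filter ι}
    {ε : ι → ℝ} {δ : ι → E} {m : ℕ} (hm : m ≠ 0) (hε : Tendsto ε l (𝓝[>] 0))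
    (hδ : ∀ᶠ i in l, m * ‖δ i‖ ≤ ε i) :
    (fun i ↦ (fwdDiff (δ i))^[m] (f - g) x) =o[l] fun i ↦ lam (ε i) := by
  refine isLittleO_iff.2 fun c hc ↦ ?_
  have increments := hε.eventually
    (hfg.eventually_norm_increment_le (c := c / 2 ^ m) (by positivity))
  filter_upwards [increments, hδ] with i hincr hδi
  have step_le (j : ℕ) (hj : j ≤ m) : ‖j • δ i‖ ≤ ε i :=
    calc ‖j • δ i‖ ≤ j * ‖δ i‖ := norm_nsmul_le
      _ ≤ m * ‖δ i‖ := by gcongr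
      _ ≤ ε i := hδi
  calc ‖(fwdDiff (δ i))^[m] (f - g) x‖ ≤ 2 ^ m * (c / 2 ^ m * ‖lam (ε i)‖) :=
        norm_fwdDiff_iter_le_of_increments hm fun j hj ↦ hincr _ (step_le j hj)
    _ = c * ‖lam (ε i)‖ := by field_simp

end RefinablyClose

theorem stmt11_general {ι 𝕜 F : Type*} [NormedField 𝕜] [SeminormedAddCommGroup F] [NormedSpace 𝕜 F]
    {l : Filter ι} {lam : ℝ → ℝ} {f g : 𝕜 → F} {x₀ : 𝕜} {m : ℕ} {ε : ι → ℝ} {δ : ι → 𝕜}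
    (hclose : RefinablyClose lam f g x₀) (hm : m ≠ 0) (hε : Tendsto ε l (𝓝[>] 0))
    (hlam : (fun i ↦ lam (ε i)) =O[l] fun i ↦ ε i ^ m)
    (hδ : ∀ᶠ i in l, m * ‖δ i‖ ≤ ε i) (hεδ : ε =O[l] δ) :
    Tendsto (fun i ↦
        (δ i ^ m)⁻¹ • (fwdDiff (δ i))^[m] f x₀ - (δ i ^ m)⁻¹ • (fwdDiff (δ i))^[m] g x₀)
      l (𝓝 0) := by
  have difference_small : (fun i ↦ (fwdDiff (δ i))^[m] (f - g) x₀) =o[l] fun i ↦ δ i ^ m :=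
    (hclose.isLittleO_fwdDiff_iter hm hε hδ).trans_isBigO (hlam.trans (hεδ.pow m))
  simpa only [fwdDiff_iter_sub, Pi.sub_apply, smul_sub]
    using difference_small.tendsto_inv_smul_nhds_zero

/-- Analytic core of Lemma 5 (Fock's reasoning): under refinable measurement errors
with `λ(εₙ)/εₙ³ → K < ∞` along a sequence `εₙ → 0⁺`, the third forward difference
quotients of `f` and `g` at `x₀` agree in the limit. -/
theorem stmt11 (lam : ℝ → ℝ) (hlam : ∀ ε > 0, 0 ≤ lam ε)
    (f g : ℝ → ℝ) (x₀ : ℝ) (C : ℝ) (hC : 0 < C ∧ C ≤ 1 / 3)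
    (hclose : ∀ k : ℝ, 0 < k → k ≤ 1 → ∃ ε₀ > 0, ∀ ε : ℝ, 0 < ε → ε < ε₀ →
      ∀ δ : ℝ, |δ| ≤ ε →
        |(f (x₀ + δ) - f x₀) - (g (x₀ + δ) - g x₀)| ≤ k * lam ε)
    (ε : ℕ → ℝ) (hεpos : ∀ n, 0 < ε n) (hε0 : Tendsto ε atTop (𝓝 0))
    (K : ℝ) (hK : Tendsto (fun n => lam (ε n) / (ε n) ^ 3) atTop (𝓝 K))
    (δ : ℕ → ℝ) (hδ : ∀ n, C * ε n ≤ |δ n| ∧ |δ n| ≤ ε n / 3) :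
    Tendsto (fun n =>
        (f (x₀ + 3 * δ n) - 3 * f (x₀ + 2 * δ n) + 3 * f (x₀ + δ n) - f x₀) / (δ n) ^ 3 -
        (g (x₀ + 3 * δ n) - 3 * g (x₀ + 2 * δ n) + 3 * g (x₀ + δ n) - g x₀) / (δ n) ^ 3)
      atTop (𝓝 0) := by
  have hfg : RefinablyClose lam f g x₀ := hclose
  have hε : Tendsto ε atTop (𝓝[>] 0) := tendsto_nhdsWithin_iff.2 ⟨hε0, .of_forall hεpos⟩
  have hlamO : (fun n ↦ lam (ε n)) =O[atTop] fun n ↦ ε n ^ 3 :=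
    isBigO_of_div_tendsto_nhds (.of_forall fun n h ↦ absurd h (pow_pos (hεpos n) 3).ne') K hK
  have hεδ : ε =O[atTop] δ := .of_bound C⁻¹ <| .of_forall fun n ↦ by
    simpa [le_inv_mul_iff₀ hC.1, abs_of_pos (hεpos n)] using (hδ n).1
  have hδε (n : ℕ) : (3 : ℕ) * ‖δ n‖ ≤ ε n :=
    (le_div_iff₀' (by norm_num)).1 (by simpa using (hδ n).2)
  simpa [fwdDiff_iter_three_apply, div_eq_inv_mul] using
    stmt11_general hfg three_ne_zero hε hlamO (.of_forall hδε) hεδ
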